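/- Let S be a finite set of evaluators, H ⊆ S with |H| ≥ 2, α : S × S → ℝ symmetric, and real numbers γ, τ, μ_min with 1/2 + γ < τ < μ_min − γ. Suppose (i) α(i,j) ≥ μ_min − γ for all distinct i, j ∈ H, and (ii) α(i,j) ≤ 1/2 + γ for all distinct pairs i, j with at least one member outside H. Then H is τ-consistent and non-trivial, every τ-consistent set C with |C| > 1 satisfies C ⊆ H, and H is the unique maximal τ-consistent non-trivial subset of S (maximal meaning not a proper subset of any other τ-consistent set). (Part (c) of the uniqueness theorem, on the concentration event.) -/

import Mathlib

/-- A set `C` of evaluators is `τ`-consistent for the empirical pairwise agreement `α` if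
every pair of distinct members agrees at rate at least `τ`. -/
def TauConsistent {S : Type*} (α : S → S → ℝ) (τ : ℝ) (C : Finset S) : Prop :=
  ∀ i ∈ C, ∀ j ∈ C, i ≠ j → τ ≤ α i j

/-- Part (c) of the uniqueness theorem, on the concentration event: if honest–honest
empirical agreements are all at least `μ_min − γ`, agreements of pairs containing a
non-honest evaluator are at most `1/2 + γ`, and `1/2 + γ < τ < μ_min − γ`, then the honest
set `H` is `τ`-consistent and non-trivial, every non-trivial `τ`-consistent set is
contained in `H`, and `H` is the unique maximal `τ`-consistent non-trivial set (maximal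
meaning not a proper subset of any other `τ`-consistent set). -/
theorem honest_set_unique_maximal {S : Type*} [Fintype S] [DecidableEq S]
    (H : Finset S) (hH : 2 ≤ H.card)
    (α : S → S → ℝ) (hsym : ∀ i j, α i j = α j i)
    (γ τ μmin : ℝ) (hτ1 : 1/2 + γ < τ) (hτ2 : τ < μmin - γ)
    (hHH : ∀ i ∈ H, ∀ j ∈ H, i ≠ j → μmin - γ ≤ α i j)
    (hmix : ∀ i j : S, i ≠ j → (i ∉ H ∨ j ∉ H) → α i j ≤ 1/2 + γ) :
    (TauConsistent α τ H ∧ 1 < H.card) ∧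
    (∀ C : Finset S, TauConsistent α τ C → 1 < C.card → C ⊆ H) ∧
    (∀ D : Finset S, TauConsistent α τ D → ¬ H ⊂ D) ∧
    (∀ C : Finset S, TauConsistent α τ C → 1 < C.card →
      (∀ D : Finset S, TauConsistent α τ D → ¬ C ⊂ D) → C = H) := by
  have hcons : TauConsistent α τ H := fun i hi j hj hij =>
    (hτ2.le).trans (hHH i hi j hj hij)
  have hsub : ∀ C : Finset S, TauConsistent α τ C → 1 < C.card → C ⊆ H := by
    intro C hC hcard i hi
    by_contra hiH
    obtain ⟨j, hj, hji⟩ := Finset.exists_mem_ne hcard i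
    have h1 := hC i hi j hj hji.symm
    have h2 := hmix i j hji.symm (Or.inl hiH)
    linarith
  refine ⟨⟨hcons, hH⟩, hsub, ?_, ?_⟩
  · intro D hD hHD
    exact hHD.2 (hsub D hD (lt_of_lt_of_le hH (Finset.card_le_card hHD.1)))
  · intro C hC hcard hmax
    by_contra hne
    exact hmax H hcons ((hsub C hC hcard).ssubset_of_ne hne)
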